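/- arXiv:2108.09321 — 3 statements merged into one kernel-verified Lean document; each statement's English description precedes it below -/
import Mathlib

section
/- Let f be bistable (assumption (A2)) with interior zero u*. Define h(u) = −(3f(u) + u·f'(u)) / (2·√(u·f(u))) for u ∈ (u*, 1). Then h(u) → −∞ as u → u*+ and h(u) → +∞ as u → 1−. If moreover f satisfies (A4), then h is strictly increasing on (u*, 1); consequently, for every c ∈ ℝ there exists a unique point ū ∈ (u*, 1) with h(ū) = c, and the function z*(u) = (3f(u) + u·f'(u)) / (2·√(u·f(u))) + c is strictly positive on (u*, ū) and strictly negative on (ū, 1). -/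
open Set Filter

/-!
For a general coefficient `k` in place of `3`, the derivative of
`h(u) = -(k f(u) + u f'(u)) / (2 √(u f(u)))` is `((√k f - u f')² - u f R) / (4 (u f)^(3/2))` with
`R = (√k - 1)² f' + 2 u f''`. For `k = 3` the constant is `(√3 - 1)² = 4 - 2√3`, so (A4) says
`R ≤ 0` and `h` is nondecreasing. If `h` were constant near a point, both terms of the numerator
would vanish there: differentiating `√k f = u f'` gives `u f'' = (√k - 1) f'`, hence
`R = (k - 1) f'`, which is positive when `k > 1`, since `f' = √k f / u > 0`.
At the endpoints `f` vanishes, so `h` blows up with the sign of `-u f'`.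
-/

open scoped Topology

/-- The function `h` of the paper, with the coefficient `3` replaced by `k`; the control for wave
speed `c` changes sign where `h = c`. It is meaningful where `u * f u > 0`; elsewhere the square
root, and with it the quotient, takes the value `0`. -/
noncomputable def switchingFunction (k : ℝ) (f : ℝ → ℝ) (u : ℝ) : ℝ :=
  -(k * f u + u * deriv f u) / (2 * √(u * f u))

/-- The function `z*` of the paper, with the coefficient `3` replaced by `k`: the control intensity
of the traveling profile of speed `c` at the point where the profile has value `u`. -/
noncomputable def controlIntensity (k : ℝ) (f : ℝ → ℝ) (c u : ℝ) : ℝ :=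
  (k * f u + u * deriv f u) / (2 * √(u * f u)) + c

theorem pos_on_Ioo_of_deriv_pos_left {f : ℝ → ℝ} {a b : ℝ} (hf : ContinuousOn f (Ioo a b))
    (hne : ∀ u ∈ Ioo a b, f u ≠ 0) (hfa : f a = 0) (hfa' : 0 < deriv f a) :
    ∀ u ∈ Ioo a b, 0 < f u := by
  intro u hu
  have pos_near_left : ∀ᶠ v in 𝓝[>] a, 0 < f v := by
    filter_upwards [self_mem_nhdsWithin, nhdsWithin_le_nhds
      (eventually_nhdsWithin_sign_eq_of_deriv_pos hfa' hfa)] with v hv hsign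
    rwa [sign_pos (sub_pos.2 hv), sign_eq_one_iff] at hsign
  obtain ⟨w, hfw, hw⟩ := (pos_near_left.and (Ioo_mem_nhdsGT (hu.1.trans hu.2))).exists
  by_contra hfu
  obtain ⟨v, hv, hfv⟩ := isPreconnected_Ioo.intermediate_value hu hw hf ⟨not_lt.1 hfu, hfw.le⟩
  exact hne v hv hfv

theorem strictMonoOn_of_monotoneOn_of_not_deriv_eventuallyEq_zero {h : ℝ → ℝ} {s : Set ℝ}
    (hs : s.OrdConnected) (hmono : MonotoneOn h s)
    (hflat : ∀ x ∈ interior s, ¬ deriv h =ᶠ[𝓝 x] 0) : StrictMonoOn h s := by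
  intro x hx y hy hxy
  refine (hmono hx hy hxy.le).lt_of_ne fun heq => ?_
  have hsub : Ioo x y ⊆ s := Ioo_subset_Icc_self.trans (hs.out hx hy)
  have hconst : ∀ v ∈ Ioo x y, h v = h x := fun v hv =>
    le_antisymm ((hmono (hsub hv) hy hv.2.le).trans heq.ge) (hmono hx (hsub hv) hv.1.le)
  obtain ⟨w, hw⟩ := exists_between hxy
  have heventually : h =ᶠ[𝓝 w] fun _ => h x :=
    eventually_of_mem (isOpen_Ioo.mem_nhds hw) hconst
  refine hflat w (interior_maximal hsub isOpen_Ioo hw) ?_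
  simpa only [deriv_const'] using! heventually.deriv

theorem exists_eq_of_strictMonoOn_Ioo_of_tendsto {h : ℝ → ℝ} {a b : ℝ} (hab : a < b)
    (hcont : ContinuousOn h (Ioo a b)) (hmono : StrictMonoOn h (Ioo a b))
    (hbot : Tendsto h (𝓝[>] a) atBot) (htop : Tendsto h (𝓝[<] b) atTop) (c : ℝ) :
    ∃ x ∈ Ioo a b, h x = c ∧ (∀ v ∈ Ioo a b, h v = c → v = x) ∧
      (∀ u ∈ Ioo a x, h u < c) ∧ ∀ u ∈ Ioo x b, c < h u := by
  have hsurj : SurjOn h (Ioo a b) univ :=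
    hcont.surjOn_of_tendsto (nonempty_Ioo.2 hab)
      ((tendsto_comp_coe_Ioo_atBot hab).2 hbot) ((tendsto_comp_coe_Ioo_atTop hab).2 htop)
  obtain ⟨x, hx, rfl⟩ := hsurj (mem_univ c)
  exact ⟨x, hx, rfl, fun v hv hvx => hmono.injOn hv hx hvx,
    fun u hu => hmono ⟨hu.1, hu.2.trans hx.2⟩ hx hu.2,
    fun u hu => hmono hx ⟨hx.1.trans hu.1, hu.2⟩ hu.1⟩

section SwitchingFunction

variable {k : ℝ} {f : ℝ → ℝ}

theorem controlIntensity_eq (c u : ℝ) :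
    controlIntensity k f c u = c - switchingFunction k f u := by
  unfold controlIntensity switchingFunction
  ring

theorem tendsto_neg_mul_add_mul_deriv {p : ℝ} (hf : ContinuousAt f p)
    (hf' : ContinuousAt (deriv f) p) (hfp : f p = 0) :
    Tendsto (fun u => -(k * f u + u * deriv f u)) (𝓝 p) (𝓝 (-(p * deriv f p))) := by
  have hcont : ContinuousAt (fun u => -(k * f u + u * deriv f u)) p := by fun_prop
  simpa [hfp] using hcont.tendsto

theorem tendsto_inv_two_mul_sqrt_mul_atTop {p : ℝ} {l : Filter ℝ} (hl : l ≤ 𝓝 p)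
    (hf : ContinuousAt f p) (hfp : f p = 0) (hpos : ∀ᶠ u in l, 0 < u * f u) :
    Tendsto (fun u => (2 * √(u * f u))⁻¹) l atTop := by
  have hcont : ContinuousAt (fun u => 2 * √(u * f u)) p := by fun_prop
  have hzero : Tendsto (fun u => 2 * √(u * f u)) l (𝓝 0) := by
    simpa [hfp] using hcont.tendsto.mono_left hl
  refine Tendsto.inv_tendsto_nhdsGT_zero (tendsto_nhdsWithin_iff.2 ⟨hzero, ?_⟩)
  filter_upwards [hpos] with u hu using mul_pos two_pos (Real.sqrt_pos.2 hu)

theorem tendsto_switchingFunction_atBot {p : ℝ} {l : Filter ℝ} (hl : l ≤ 𝓝 p)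
    (hf : ContinuousAt f p) (hf' : ContinuousAt (deriv f) p) (hfp : f p = 0)
    (hp : 0 < p * deriv f p) (hpos : ∀ᶠ u in l, 0 < u * f u) :
    Tendsto (switchingFunction k f) l atBot :=
  ((tendsto_neg_mul_add_mul_deriv hf hf' hfp).mono_left hl).neg_mul_atTop (neg_lt_zero.2 hp)
    (tendsto_inv_two_mul_sqrt_mul_atTop hl hf hfp hpos)

theorem tendsto_switchingFunction_atTop {p : ℝ} {l : Filter ℝ} (hl : l ≤ 𝓝 p)
    (hf : ContinuousAt f p) (hf' : ContinuousAt (deriv f) p) (hfp : f p = 0)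
    (hp : p * deriv f p < 0) (hpos : ∀ᶠ u in l, 0 < u * f u) :
    Tendsto (switchingFunction k f) l atTop :=
  ((tendsto_neg_mul_add_mul_deriv hf hf' hfp).mono_left hl).pos_mul_atTop (neg_pos.2 hp)
    (tendsto_inv_two_mul_sqrt_mul_atTop hl hf hfp hpos)

theorem hasDerivAt_switchingFunction {u : ℝ} (hk : 0 ≤ k) (hpos : 0 < u * f u)
    (hf : DifferentiableAt ℝ f u) (hf' : DifferentiableAt ℝ (deriv f) u) :
    HasDerivAt (switchingFunction k f)
      (((√k * f u - u * deriv f u) ^ 2 -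
          u * f u * ((√k - 1) ^ 2 * deriv f u + 2 * u * deriv (deriv f) u)) /
        (4 * √(u * f u) ^ 3)) u := by
  have hsqrt_pos : 0 < √(u * f u) := Real.sqrt_pos.2 hpos
  have hnum : HasDerivAt (fun v => -(k * f v + v * deriv f v))
      (-(k * deriv f u + (1 * deriv f u + u * deriv (deriv f) u))) u :=
    ((hf.hasDerivAt.const_mul k).add ((hasDerivAt_id u).mul hf'.hasDerivAt)).neg
  have hden : HasDerivAt (fun v => 2 * √(v * f v))
      (2 * ((1 * f u + u * deriv f u) / (2 * √(u * f u)))) u :=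
    (((hasDerivAt_id u).mul hf.hasDerivAt).sqrt hpos.ne').const_mul 2
  refine (hnum.div hden (by positivity)).congr_deriv ?_
  have hsq : √(u * f u) ^ 2 = u * f u := Real.sq_sqrt hpos.le
  have hsqk : √k ^ 2 = k := Real.sq_sqrt hk
  generalize √(u * f u) = s at *
  generalize √k = r at *
  subst hsqk
  field_simp
  rw [hsq]
  ring

theorem deriv_switchingFunction_nonneg {u : ℝ} (hk : 0 ≤ k) (hpos : 0 < u * f u)
    (hf : DifferentiableAt ℝ f u) (hf' : DifferentiableAt ℝ (deriv f) u)
    (hA : (√k - 1) ^ 2 * deriv f u + 2 * u * deriv (deriv f) u ≤ 0) :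
    0 ≤ deriv (switchingFunction k f) u := by
  rw [(hasDerivAt_switchingFunction hk hpos hf hf').deriv]
  have hnum := (mul_nonpos_of_nonneg_of_nonpos hpos.le hA).trans
    (sq_nonneg (√k * f u - u * deriv f u))
  exact div_nonneg (sub_nonneg.2 hnum) (by positivity)

theorem sqrt_mul_eq_of_deriv_switchingFunction_eq_zero {u : ℝ} (hk : 0 ≤ k) (hpos : 0 < u * f u)
    (hf : DifferentiableAt ℝ f u) (hf' : DifferentiableAt ℝ (deriv f) u)
    (hA : (√k - 1) ^ 2 * deriv f u + 2 * u * deriv (deriv f) u ≤ 0)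
    (hzero : deriv (switchingFunction k f) u = 0) : √k * f u = u * deriv f u := by
  have hsqrt_pos : 0 < √(u * f u) := Real.sqrt_pos.2 hpos
  rw [(hasDerivAt_switchingFunction hk hpos hf hf').deriv,
    div_eq_zero_iff, or_iff_left (by positivity), sub_eq_zero] at hzero
  have hsq : (√k * f u - u * deriv f u) ^ 2 ≤ 0 :=
    hzero.trans_le (mul_nonpos_of_nonneg_of_nonpos hpos.le hA)
  exact sub_eq_zero.1 (pow_eq_zero_iff two_ne_zero |>.1 (hsq.antisymm (sq_nonneg _)))

theorem mul_deriv_deriv_eq_of_eventually_mul_eq {r u : ℝ} (hf : DifferentiableAt ℝ f u)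
    (hf' : DifferentiableAt ℝ (deriv f) u) (h : ∀ᶠ v in 𝓝 u, r * f v = v * deriv f v) :
    u * deriv (deriv f) u = (r - 1) * deriv f u := by
  have hleft : HasDerivAt (fun v => r * f v) (r * deriv f u) u := hf.hasDerivAt.const_mul r
  have hright : HasDerivAt (fun v => v * deriv f v) (1 * deriv f u + u * deriv (deriv f) u) u :=
    (hasDerivAt_id u).mul hf'.hasDerivAt
  linarith [hleft.unique (hright.congr_of_eventuallyEq h)]

theorem not_deriv_switchingFunction_eventuallyEq_zero {u : ℝ} (hk : 1 < k) (hu : 0 < u)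
    (hpos : ∀ᶠ v in 𝓝 u, 0 < v * f v) (hf : ∀ᶠ v in 𝓝 u, DifferentiableAt ℝ f v)
    (hf' : ∀ᶠ v in 𝓝 u, DifferentiableAt ℝ (deriv f) v)
    (hA : ∀ᶠ v in 𝓝 u, (√k - 1) ^ 2 * deriv f v + 2 * v * deriv (deriv f) v ≤ 0) :
    ¬ deriv (switchingFunction k f) =ᶠ[𝓝 u] 0 := by
  intro hflat
  have hk0 : 0 < k := one_pos.trans hk
  have heuler : ∀ᶠ v in 𝓝 u, √k * f v = v * deriv f v := by
    filter_upwards [hpos, hf, hf', hA, hflat] with v hposv hfv hfv' hAv hzero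
    exact sqrt_mul_eq_of_deriv_switchingFunction_eq_zero hk0.le hposv hfv hfv' hAv hzero
  have hderiv_pos : 0 < deriv f u := by
    have hfu : 0 < f u := pos_of_mul_pos_right hpos.self_of_nhds hu.le
    exact pos_of_mul_pos_right
      (heuler.self_of_nhds ▸ mul_pos (Real.sqrt_pos.2 hk0) hfu) hu.le
  have hR : (√k - 1) ^ 2 * deriv f u + 2 * u * deriv (deriv f) u = (k - 1) * deriv f u := by
    linear_combination deriv f u * Real.sq_sqrt hk0.le +
      2 * mul_deriv_deriv_eq_of_eventually_mul_eq hf.self_of_nhds hf'.self_of_nhds heuler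
  exact (mul_pos (sub_pos.2 hk) hderiv_pos).not_ge (hR ▸ hA.self_of_nhds)

theorem continuousOn_switchingFunction {s : Set ℝ} (hf : ContinuousOn f s)
    (hf' : ContinuousOn (deriv f) s) (hpos : ∀ u ∈ s, 0 < u * f u) :
    ContinuousOn (switchingFunction k f) s :=
  ContinuousOn.div (by fun_prop) (by fun_prop)
    fun u hu => (mul_pos two_pos (Real.sqrt_pos.2 (hpos u hu))).ne'

theorem strictMonoOn_switchingFunction {s : Set ℝ} (hk : 1 < k) (hs : Convex ℝ s)
    (hs_pos : ∀ u ∈ s, 0 < u) (hf_pos : ∀ u ∈ s, 0 < f u)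
    (hf : ∀ u ∈ s, DifferentiableAt ℝ f u) (hf' : ∀ u ∈ s, DifferentiableAt ℝ (deriv f) u)
    (hA : ∀ u ∈ s, (√k - 1) ^ 2 * deriv f u + 2 * u * deriv (deriv f) u ≤ 0) :
    StrictMonoOn (switchingFunction k f) s := by
  have hk0 : 0 ≤ k := (one_pos.trans hk).le
  have hpos : ∀ u ∈ s, 0 < u * f u := fun u hu => mul_pos (hs_pos u hu) (hf_pos u hu)
  have hdiff : DifferentiableOn ℝ (switchingFunction k f) s := fun u hu =>
    (hasDerivAt_switchingFunction hk0 (hpos u hu) (hf u hu)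
      (hf' u hu)).differentiableAt.differentiableWithinAt
  have hmono : MonotoneOn (switchingFunction k f) s :=
    monotoneOn_of_deriv_nonneg hs hdiff.continuousOn (hdiff.mono interior_subset) fun u hu =>
      have hus := interior_subset hu
      deriv_switchingFunction_nonneg hk0 (hpos u hus) (hf u hus) (hf' u hus) (hA u hus)
  refine strictMonoOn_of_monotoneOn_of_not_deriv_eventuallyEq_zero hs.ordConnected hmono
    fun u hu => ?_
  have hnear : s ∈ 𝓝 u := mem_interior_iff_mem_nhds.1 hu
  exact not_deriv_switchingFunction_eventuallyEq_zero hk (hs_pos u (interior_subset hu))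
    (eventually_of_mem hnear hpos) (eventually_of_mem hnear hf)
    (eventually_of_mem hnear hf') (eventually_of_mem hnear hA)

theorem switching_function_monotone_general {a b : ℝ} (hk : 1 < k) (ha : 0 < a) (hab : a < b)
    (hf : ∀ u ∈ Icc a b, DifferentiableAt ℝ f u)
    (hf' : ∀ u ∈ Icc a b, DifferentiableAt ℝ (deriv f) u)
    (hfa : f a = 0) (hfb : f b = 0) (hfa' : 0 < deriv f a) (hfb' : deriv f b < 0)
    (hne : ∀ u ∈ Ioo a b, f u ≠ 0) :
    Tendsto (switchingFunction k f) (𝓝[>] a) atBot ∧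
    Tendsto (switchingFunction k f) (𝓝[<] b) atTop ∧
    ((∀ u ∈ Ioo a b, (√k - 1) ^ 2 * deriv f u + 2 * u * deriv (deriv f) u ≤ 0) →
      StrictMonoOn (switchingFunction k f) (Ioo a b) ∧
      ∀ c : ℝ, ∃ ubar ∈ Ioo a b, switchingFunction k f ubar = c ∧
        (∀ v ∈ Ioo a b, switchingFunction k f v = c → v = ubar) ∧
        (∀ u ∈ Ioo a ubar, 0 < controlIntensity k f c u) ∧
        ∀ u ∈ Ioo ubar b, controlIntensity k f c u < 0) := by
  have hsub : Ioo a b ⊆ Icc a b := Ioo_subset_Icc_self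
  have hfc : ∀ u ∈ Icc a b, ContinuousAt f u := fun u hu => (hf u hu).continuousAt
  have hfc' : ∀ u ∈ Icc a b, ContinuousAt (deriv f) u := fun u hu => (hf' u hu).continuousAt
  have hfcI : ContinuousOn f (Ioo a b) := fun u hu => (hfc u (hsub hu)).continuousWithinAt
  have hfcI' : ContinuousOn (deriv f) (Ioo a b) := fun u hu =>
    (hfc' u (hsub hu)).continuousWithinAt
  have hf_pos : ∀ u ∈ Ioo a b, 0 < f u := pos_on_Ioo_of_deriv_pos_left hfcI hne hfa hfa'
  have hpos : ∀ u ∈ Ioo a b, 0 < u * f u := fun u hu =>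
    mul_pos (ha.trans hu.1) (hf_pos u hu)
  have hbot : Tendsto (switchingFunction k f) (𝓝[>] a) atBot :=
    tendsto_switchingFunction_atBot nhdsWithin_le_nhds (hfc a (left_mem_Icc.2 hab.le))
      (hfc' a (left_mem_Icc.2 hab.le)) hfa (mul_pos ha hfa')
      (eventually_of_mem (Ioo_mem_nhdsGT hab) hpos)
  have htop : Tendsto (switchingFunction k f) (𝓝[<] b) atTop :=
    tendsto_switchingFunction_atTop nhdsWithin_le_nhds (hfc b (right_mem_Icc.2 hab.le))
      (hfc' b (right_mem_Icc.2 hab.le)) hfb (mul_neg_of_pos_of_neg (ha.trans hab) hfb')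
      (eventually_of_mem (Ioo_mem_nhdsLT hab) hpos)
  refine ⟨hbot, htop, fun hA => ?_⟩
  have hmono : StrictMonoOn (switchingFunction k f) (Ioo a b) :=
    strictMonoOn_switchingFunction hk (convex_Ioo a b) (fun u hu => ha.trans hu.1) hf_pos
      (fun u hu => hf u (hsub hu)) (fun u hu => hf' u (hsub hu)) hA
  refine ⟨hmono, fun c => ?_⟩
  simp only [controlIntensity_eq, sub_pos, sub_neg]
  exact exists_eq_of_strictMonoOn_Ioo_of_tendsto hab
    (continuousOn_switchingFunction hfcI hfcI' hpos) hmono hbot htop c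

end SwitchingFunction

/-- for bistable `f`, the function
`h(u) = -(3f(u) + u f'(u)) / (2√(u f(u)))` tends to `-∞` at `u*+` and to `+∞` at `1-`;
under (A4) it is strictly increasing, so for each `c` there is a unique `ū ∈ (u*,1)`
with `h(ū) = c`, and `z*(u) = (3f(u) + u f'(u)) / (2√(u f(u))) + c` is positive on
`(u*, ū)` and negative on `(ū, 1)`. -/
theorem switching_function_monotone
    (f : ℝ → ℝ) (hf : ContDiff ℝ 2 f) (hf0 : f 0 = 0) (hf1 : f 1 = 0)
    (hf'0 : deriv f 0 < 0) (hf'1 : deriv f 1 < 0)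
    (ustar : ℝ) (hustar : ustar ∈ Ioo (0:ℝ) 1)
    (hfz : ∀ u ∈ Ioo (0:ℝ) 1, f u = 0 ↔ u = ustar)
    (hf'u : 0 < deriv f ustar) :
    Tendsto (fun u => -(3 * f u + u * deriv f u) / (2 * Real.sqrt (u * f u)))
      (nhdsWithin ustar (Ioi ustar)) atBot ∧
    Tendsto (fun u => -(3 * f u + u * deriv f u) / (2 * Real.sqrt (u * f u)))
      (nhdsWithin 1 (Iio 1)) atTop ∧
    ((∀ u ∈ Icc ustar (1:ℝ),
        (4 - 2 * Real.sqrt 3) * deriv f u + 2 * u * deriv (deriv f) u ≤ 0) →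
      StrictMonoOn (fun u => -(3 * f u + u * deriv f u) / (2 * Real.sqrt (u * f u)))
        (Ioo ustar (1:ℝ)) ∧
      ∀ c : ℝ, ∃ ubar ∈ Ioo ustar (1:ℝ),
        -(3 * f ubar + ubar * deriv f ubar) / (2 * Real.sqrt (ubar * f ubar)) = c ∧
        (∀ v ∈ Ioo ustar (1:ℝ),
          -(3 * f v + v * deriv f v) / (2 * Real.sqrt (v * f v)) = c → v = ubar) ∧
        (∀ u ∈ Ioo ustar ubar,
          0 < (3 * f u + u * deriv f u) / (2 * Real.sqrt (u * f u)) + c) ∧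
        (∀ u ∈ Ioo ubar (1:ℝ),
          (3 * f u + u * deriv f u) / (2 * Real.sqrt (u * f u)) + c < 0)) := by
  have hfd' : Differentiable ℝ (deriv f) := hf.differentiable_deriv_two
  have hsqrt : (√3 - 1) ^ 2 = 4 - 2 * √3 := by
    linear_combination Real.sq_sqrt (show (0 : ℝ) ≤ 3 by norm_num)
  obtain ⟨hbot, htop, hA4⟩ := switching_function_monotone_general (k := 3) (by norm_num)
    hustar.1 hustar.2 (fun u _ => hf.differentiable two_ne_zero u) (fun u _ => hfd' u)
    ((hfz ustar hustar).2 rfl) hf1 hf'u hf'1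
    (fun u hu hfu => hu.1.ne' ((hfz u ⟨hustar.1.trans hu.1, hu.2⟩).1 hfu))
  exact ⟨hbot, htop, fun hA => hA4 fun u hu => hsqrt ▸ hA u (Ioo_subset_Icc_self hu)⟩
end

section
/- Let f ∈ C²([0,1]) with f(0) = f(1) = 0, let f_min = min_{u∈[0,1]} f(u) ≤ 0, and let c > 0. Suppose P : [0, ū] → [0,∞) (with 0 < ū ≤ 1) is continuous, strictly positive and C¹ on (0, ū), satisfies P(0) = 0, and solves P'(U) = −c − f(U)/P(U) for all U ∈ (0, ū). Then P(U) ≤ −f_min / c for every U ∈ [0, ū]. -/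
open Set Filter

/-!
The right-hand side `-c - f(U) / P` is nonpositive as soon as `P ≥ -f_min / c`. If `P` exceeded this
level at some `u`, then after the last `s < u` at which it does not, `P` would stay above the level
with nonpositive derivative and yet increase from `s` to `u`, contradicting the mean value theorem.
-/

theorem exists_last_le_of_continuousOn {α β : Type*}
    [LinearOrder α] [TopologicalSpace α] [OrderClosedTopology α] [CompactIccSpace α]
    [LinearOrder β] [TopologicalSpace β] [ClosedIicTopology β]
    {g : α → β} {a b : α} {M : β} (hab : a ≤ b)
    (hg : ContinuousOn g (Icc a b)) (ha : g a ≤ M) :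
    ∃ s ∈ Icc a b, g s ≤ M ∧ ∀ x ∈ Ioc s b, M < g x := by
  have sublevel_compact : IsCompact (Icc a b ∩ g ⁻¹' Iic M) :=
    isCompact_Icc.of_isClosed_subset
      (hg.preimage_isClosed_of_isClosed isClosed_Icc isClosed_Iic) inter_subset_left
  obtain ⟨s, ⟨hs, hsM⟩, s_last⟩ :=
    sublevel_compact.exists_isGreatest ⟨a, left_mem_Icc.2 hab, ha⟩
  refine ⟨s, hs, hsM, fun x hx => lt_of_not_ge fun hxM => ?_⟩
  exact hx.1.not_ge (s_last ⟨⟨hs.1.trans hx.1.le, hx.2⟩, hxM⟩)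

theorem le_of_hasDerivAt_nonpos_of_lt {g g' : ℝ → ℝ} {a b M : ℝ}
    (hg : ContinuousOn g (Icc a b)) (ha : g a ≤ M)
    (hderiv : ∀ x ∈ Ioo a b, M < g x → HasDerivAt g (g' x) x)
    (hnonpos : ∀ x ∈ Ioo a b, M < g x → g' x ≤ 0) :
    ∀ u ∈ Icc a b, g u ≤ M := by
  intro u hu
  by_contra! hMu
  have hg_u : ContinuousOn g (Icc a u) := hg.mono (Icc_subset_Icc_right hu.2)
  obtain ⟨s, hs, hsM, above⟩ := exists_last_le_of_continuousOn hu.1 hg_u ha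
  have hsu : s < u := hs.2.lt_of_ne fun h => (h ▸ hsM).not_gt hMu
  have Ioo_subset : Ioo s u ⊆ Ioo a b := Ioo_subset_Ioo hs.1 hu.2
  have above_Ioo : ∀ x ∈ Ioo s u, M < g x := fun x hx => above x (Ioo_subset_Ioc_self hx)
  obtain ⟨ξ, hξ, slope_eq⟩ := exists_hasDerivAt_eq_slope g g' hsu
    (hg_u.mono (Icc_subset_Icc_left hs.1))
    fun x hx => hderiv x (Ioo_subset hx) (above_Ioo x hx)
  have slope_pos : 0 < (g u - g s) / (u - s) :=
    div_pos (sub_pos.2 (hsM.trans_lt hMu)) (sub_pos.2 hsu)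
  exact (hnonpos ξ (Ioo_subset hξ) (above_Ioo ξ hξ)).not_gt (slope_eq ▸ slope_pos)

theorem neg_sub_div_nonpos_of_neg_div_le {c m y p : ℝ} (hc : 0 < c) (hp : 0 < p)
    (hmy : m ≤ y) (hmp : -m / c ≤ p) : -c - y / p ≤ 0 := by
  have neg_mul_le : -c * p ≤ y := by linarith [(div_le_iff₀ hc).1 hmp]
  exact sub_nonpos.2 ((le_div_iff₀ hp).2 neg_mul_le)

theorem trajectory_upper_bound_general {f P : ℝ → ℝ} {a b c m : ℝ} (hc : 0 < c)
    (hm : ∀ u ∈ Ioo a b, m ≤ f u)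
    (hPcont : ContinuousOn P (Icc a b)) (hPa : P a ≤ -m / c)
    (hPpos : ∀ u ∈ Ioo a b, 0 < P u)
    (hPode : ∀ u ∈ Ioo a b, HasDerivAt P (-c - f u / P u) u) :
    ∀ u ∈ Icc a b, P u ≤ -m / c :=
  le_of_hasDerivAt_nonpos_of_lt hPcont hPa (fun u hu _ => hPode u hu) fun u hu hlt =>
    neg_sub_div_nonpos_of_neg_div_le hc (hPpos u hu) (hm u hu) hlt.le

/-- a priori bound on trajectories of `dP/dU = -c - f(U)/P` emanating
from the origin: `P(U) ≤ -f_min / c` on `[0, ū]`. -/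
theorem trajectory_upper_bound
    (f : ℝ → ℝ) (hf : ContDiff ℝ 2 f) (hf0 : f 0 = 0) (hf1 : f 1 = 0)
    (fmin : ℝ) (hfmin : IsLeast (f '' Icc (0:ℝ) 1) fmin)
    (c : ℝ) (hc : 0 < c)
    (ubar : ℝ) (hubar0 : 0 < ubar) (hubar1 : ubar ≤ 1)
    (P : ℝ → ℝ) (hPcont : ContinuousOn P (Icc 0 ubar)) (hP0 : P 0 = 0)
    (hPnonneg : ∀ u ∈ Icc (0:ℝ) ubar, 0 ≤ P u)
    (hPpos : ∀ u ∈ Ioo (0:ℝ) ubar, 0 < P u)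
    (hPode : ∀ u ∈ Ioo (0:ℝ) ubar, HasDerivAt P (-c - f u / P u) u) :
    ∀ u ∈ Icc (0:ℝ) ubar, P u ≤ -fmin / c := by
  have fmin_le : ∀ u ∈ Icc (0 : ℝ) 1, fmin ≤ f u := fun u hu => hfmin.2 (mem_image_of_mem f hu)
  have fmin_nonpos : fmin ≤ 0 := hf0 ▸ fmin_le 0 (left_mem_Icc.2 zero_le_one)
  exact trajectory_upper_bound_general hc
    (fun u hu => fmin_le u ⟨hu.1.le, hu.2.le.trans hubar1⟩) hPcont
    (hP0.trans_le (div_nonneg (neg_nonneg.2 fmin_nonpos) hc.le)) hPpos hPode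
end

section
/- Let f be monostable (assumption (A1)) and let c₁ < c₂. For i = 1,2, let P(·, c_i) : [0,1] → [0,∞) be the solution of dP/dU = −c_i − f(U)/P with P(1, c_i) = 0 and P(U, c_i) > 0 for U ∈ [0,1). Then P(U, c₁) < P(U, c₂) for every U ∈ [0,1). -/
open Set Filter

/-!
Writing `Pᵢ = P(·, cᵢ)`, the equation reads `(Pᵢ² / 2)' = -cᵢ Pᵢ - f`, so `f` cancels in
`((P₂² - P₁²) / 2)' = c₁ P₁ - c₂ P₂`. Where `P₁ = P₂ > 0` the right-hand side is negative, so once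
`P₂ ≤ P₁` holds at some point it persists to the right of it. But `P₂ ≤ P₁` and `0 ≤ f` give
`(P₂ - P₁)' = (c₁ - c₂) + (f / P₁ - f / P₂) < 0`, so `P₂ - P₁` would reach a negative value at the
right endpoint, where both solutions vanish.
-/

/-- A positive solution over `[a, b)` of `dP/dU = -c - f(U)/P`, continuous up to `b`: an orbit in
the upper half of the phase plane of `U' = P`, `P' = -cP - f(U)`, written as a graph over `U`. The
equation is imposed on the open interval only, and the value at `b` is left free. -/
structure IsPositiveOrbit (f : ℝ → ℝ) (c a b : ℝ) (P : ℝ → ℝ) : Prop where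
  continuousOn : ContinuousOn P (Icc a b)
  pos : ∀ u ∈ Ico a b, 0 < P u
  hasDerivAt : ∀ u ∈ Ioo a b, HasDerivAt P (-c - f u / P u) u

theorem nonneg_of_deriv2_neg {f : ℝ → ℝ} {a b : ℝ} (hf : ContinuousOn f (Icc a b))
    (hfa : 0 ≤ f a) (hfb : 0 ≤ f b) (hf'' : ∀ u ∈ Ioo a b, deriv (deriv f) u < 0) :
    ∀ u ∈ Icc a b, 0 ≤ f u := by
  intro u hu
  have hab : a ≤ b := hu.1.trans hu.2
  have hconcave : StrictConcaveOn ℝ (Icc a b) f :=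
    strictConcaveOn_of_deriv2_neg (convex_Icc a b) hf (by rwa [interior_Icc])
  exact (le_min hfa hfb).trans <|
    hconcave.concaveOn.min_le_of_mem_Icc (left_mem_Icc.2 hab) (right_mem_Icc.2 hab) hu

theorem hasDerivWithinAt_Ici_of_continuousOn_deriv {g g' : ℝ → ℝ} {a b : ℝ}
    (hg : ContinuousOn g (Ico a b)) (hg' : ContinuousOn g' (Ico a b))
    (hderiv : ∀ x ∈ Ioo a b, HasDerivAt g (g' x) x) :
    ∀ x ∈ Ico a b, HasDerivWithinAt g (g' x) (Ici x) x := by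
  intro x hx
  have hsub : Ioo x b ⊆ Ico a b := fun y hy => ⟨hx.1.trans hy.1.le, hy.2⟩
  have hderiv_right : ∀ y ∈ Ioo x b, HasDerivAt g (g' y) y :=
    fun y hy => hderiv y ⟨hx.1.trans_lt hy.1, hy.2⟩
  have hmem : Ioo x b ∈ nhdsWithin x (Ioi x) := Ioo_mem_nhdsGT hx.2
  refine hasDerivWithinAt_Ici_of_tendsto_deriv
    (fun y hy => (hderiv_right y hy).differentiableAt.differentiableWithinAt)
    ((hg x hx).mono hsub) hmem ?_
  have hlim : Tendsto g' (nhdsWithin x (Ioi x)) (nhds (g' x)) := by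
    rw [← nhdsWithin_Ioo_eq_nhdsGT hx.2]
    exact (hg' x hx).mono hsub
  refine hlim.congr' ?_
  filter_upwards [hmem] with y hy using (hderiv_right y hy).deriv.symm

namespace IsPositiveOrbit

section SingleSpeed

variable {f P : ℝ → ℝ} {c a b : ℝ}

theorem mono_left (hP : IsPositiveOrbit f c a b P) {u : ℝ} (hu : a ≤ u) :
    IsPositiveOrbit f c u b P where
  continuousOn := hP.continuousOn.mono (Icc_subset_Icc_left hu)
  pos x hx := hP.pos x (Ico_subset_Ico_left hu hx)
  hasDerivAt x hx := hP.hasDerivAt x (Ioo_subset_Ioo_left hu hx)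

theorem hasDerivAt_sq_div_two (hP : IsPositiveOrbit f c a b P) {u : ℝ} (hu : u ∈ Ioo a b) :
    HasDerivAt (fun x => P x ^ 2 / 2) (-c * P u - f u) u := by
  have hne : P u ≠ 0 := (hP.pos u (Ioo_subset_Ico_self hu)).ne'
  refine (((hP.hasDerivAt u hu).pow 2).div_const 2).congr_deriv ?_
  field

end SingleSpeed

section TwoSpeeds

variable {f P₁ P₂ : ℝ → ℝ} {c₁ c₂ a b : ℝ}

theorem hasDerivWithinAt_sq_div_two_sub (hP₁ : IsPositiveOrbit f c₁ a b P₁)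
    (hP₂ : IsPositiveOrbit f c₂ a b P₂) :
    ∀ u ∈ Ico a b, HasDerivWithinAt (fun x => P₂ x ^ 2 / 2 - P₁ x ^ 2 / 2)
      (c₁ * P₁ u - c₂ * P₂ u) (Ici u) u := by
  have hcont₁ : ContinuousOn P₁ (Ico a b) := hP₁.continuousOn.mono Ico_subset_Icc_self
  have hcont₂ : ContinuousOn P₂ (Ico a b) := hP₂.continuousOn.mono Ico_subset_Icc_self
  refine hasDerivWithinAt_Ici_of_continuousOn_deriv
    (g' := fun x => c₁ * P₁ x - c₂ * P₂ x) (by fun_prop) (by fun_prop) fun x hx => ?_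
  exact ((hP₂.hasDerivAt_sq_div_two hx).sub (hP₁.hasDerivAt_sq_div_two hx)).congr_deriv (by ring)

theorem le_of_le_left (hc : c₁ < c₂) (hP₁ : IsPositiveOrbit f c₁ a b P₁)
    (hP₂ : IsPositiveOrbit f c₂ a b P₂) (ha : P₂ a ≤ P₁ a) :
    ∀ u ∈ Ico a b, P₂ u ≤ P₁ u := by
  have hcont₁ := hP₁.continuousOn
  have hcont₂ := hP₂.continuousOn
  intro u hu
  have hab : a < b := hu.1.trans_lt hu.2
  have hsq_a : P₂ a ^ 2 ≤ P₁ a ^ 2 :=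
    pow_le_pow_left₀ (hP₂.pos a (left_mem_Ico.2 hab)).le ha 2
  have hsq : P₂ u ^ 2 / 2 - P₁ u ^ 2 / 2 ≤ 0 := by
    refine image_le_of_deriv_right_lt_deriv_boundary
      (f := fun x => P₂ x ^ 2 / 2 - P₁ x ^ 2 / 2) (B := fun _ => 0) (B' := fun _ => 0)
      (by fun_prop) (hP₁.hasDerivWithinAt_sq_div_two_sub hP₂) (by linarith)
      (fun x => hasDerivAt_const x 0) (fun x hx hzero => ?_) (Ico_subset_Icc_self hu)
    have heq : P₂ x = P₁ x :=
      (sq_eq_sq₀ (hP₂.pos x hx).le (hP₁.pos x hx).le).1 (by linarith)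
    rw [heq, ← sub_mul]
    exact mul_neg_of_neg_of_pos (sub_neg.2 hc) (hP₁.pos x hx)
  exact le_of_sq_le_sq (by linarith) (hP₁.pos u hu).le

theorem strictAntiOn_sub (hc : c₁ < c₂) (hf : ∀ u ∈ Ioo a b, 0 ≤ f u)
    (hP₁ : IsPositiveOrbit f c₁ a b P₁) (hP₂ : IsPositiveOrbit f c₂ a b P₂)
    (hle : ∀ u ∈ Ioo a b, P₂ u ≤ P₁ u) :
    StrictAntiOn (P₂ - P₁) (Icc a b) := by
  refine strictAntiOn_of_deriv_neg (convex_Icc a b) (hP₂.continuousOn.sub hP₁.continuousOn) ?_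
  rw [interior_Icc]
  intro x hx
  have hdiv : f x / P₁ x ≤ f x / P₂ x :=
    div_le_div_of_nonneg_left (hf x hx) (hP₂.pos x (Ioo_subset_Ico_self hx)) (hle x hx)
  rw [((hP₂.hasDerivAt x hx).sub (hP₁.hasDerivAt x hx)).deriv]
  linarith

end TwoSpeeds

end IsPositiveOrbit

theorem stable_manifold_monotone_in_speed_general {f P₁ P₂ : ℝ → ℝ} {c₁ c₂ a b : ℝ}
    (hf : ∀ u ∈ Ioo a b, 0 ≤ f u) (hc : c₁ < c₂) (hP₁ : IsPositiveOrbit f c₁ a b P₁)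
    (hP₂ : IsPositiveOrbit f c₂ a b P₂) (hb : P₁ b ≤ P₂ b) :
    ∀ u ∈ Ico a b, P₁ u < P₂ u := by
  intro u hu
  by_contra! hle
  have hP₁u := hP₁.mono_left hu.1
  have hP₂u := hP₂.mono_left hu.1
  have hle_right : ∀ x ∈ Ico u b, P₂ x ≤ P₁ x := hP₁u.le_of_le_left hc hP₂u hle
  have hanti : StrictAntiOn (P₂ - P₁) (Icc u b) :=
    hP₁u.strictAntiOn_sub hc (fun x hx => hf x (Ioo_subset_Ioo_left hu.1 hx)) hP₂u
      fun x hx => hle_right x (Ioo_subset_Ico_self hx)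
  have hlt : P₂ b - P₁ b < P₂ u - P₁ u :=
    hanti (left_mem_Icc.2 hu.2.le) (right_mem_Icc.2 hu.2.le) hu.2
  linarith

/-- monostable case. The stable-manifold solutions of
`dP/dU = -c - f(U)/P` with `P(1) = 0`, `P > 0` on `[0,1)`, are strictly
increasing in the speed `c`: if `c₁ < c₂` then `P(U,c₁) < P(U,c₂)` on `[0,1)`. -/
theorem stable_manifold_monotone_in_speed
    (f : ℝ → ℝ) (hf : ContDiff ℝ 2 f) (hf0 : f 0 = 0) (hf1 : f 1 = 0)
    (hf'' : ∀ u ∈ Icc (0:ℝ) 1, deriv (deriv f) u < 0)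
    (c₁ c₂ : ℝ) (hc : c₁ < c₂)
    (P₁ P₂ : ℝ → ℝ)
    (hP₁cont : ContinuousOn P₁ (Icc (0:ℝ) 1)) (hP₁1 : P₁ 1 = 0)
    (hP₁pos : ∀ u ∈ Ico (0:ℝ) 1, 0 < P₁ u)
    (hP₁ode : ∀ u ∈ Ioo (0:ℝ) 1, HasDerivAt P₁ (-c₁ - f u / P₁ u) u)
    (hP₂cont : ContinuousOn P₂ (Icc (0:ℝ) 1)) (hP₂1 : P₂ 1 = 0)
    (hP₂pos : ∀ u ∈ Ico (0:ℝ) 1, 0 < P₂ u)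
    (hP₂ode : ∀ u ∈ Ioo (0:ℝ) 1, HasDerivAt P₂ (-c₂ - f u / P₂ u) u) :
    ∀ u ∈ Ico (0:ℝ) 1, P₁ u < P₂ u := by
  have hf_nonneg := nonneg_of_deriv2_neg hf.continuous.continuousOn hf0.ge hf1.ge
    fun u hu => hf'' u (Ioo_subset_Icc_self hu)
  exact stable_manifold_monotone_in_speed_general
    (fun u hu => hf_nonneg u (Ioo_subset_Icc_self hu)) hc
    ⟨hP₁cont, hP₁pos, hP₁ode⟩ ⟨hP₂cont, hP₂pos, hP₂ode⟩ (hP₁1.trans hP₂1.symm).le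
end
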